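/- For κ > 0 let G_κ : R^d → R be the smooth-max function G_κ(x) = κ⁻¹ ln(Σ_{j=1}^d e^{κ x_j}), and for v ∈ R^d let p(v) := Σ_{i=1}^d e^{κ v_i}. Then G_κ is three times differentiable at every v ∈ R^d and its third derivative, as a trilinear form applied to directions x, y, z ∈ R^d, equals G_κ'''(v)(x, y, z) = κ² · p(v)⁻³ · Σ_{1≤i,j,k≤d} e^{κ v_i} c_{ijk}(v) x_i y_j z_k, where, with b_{ii}(v) = p(v) − e^{κ v_i} and b_{ij}(v) = −e^{κ v_j} for i ≠ j, one has c_{ijk}(v) = b_{ik}(v)(p(v) − 2e^{κ v_j}) if i = j or j = k, c_{ijk}(v) = b_{ij}(v)(p(v) − 2e^{κ v_k}) if i = k ≠ j, and c_{ijk}(v) = 2 b_{ij}(v) b_{ik}(v) if i, j, k are pairwise distinct. -/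

import Mathlib

/-!
The weighted exponential sums `S a u = Σ_i a_i exp(κ u_i)` are closed under directional
differentiation: `∂_x S a = κ S (a x)`. As `p = S 1`, three applications of the chain and
quotient rules give
`DG z = S z / p`, `D²G y z = κ (S (y z) / p - S y S z / p²)` and
`D³G x y z = κ² (S (x y z) / p - (S (y z) S x + S (x y) S z + S (x z) S y) / p²
  + 2 S x S y S z / p³)`.
On the other side, with `e_i = exp(κ v_i)`, a case distinction on coincidences of indices gives
`e_i c_{ijk} = p² e_i δ_{ij} δ_{jk} - p (e_i e_k δ_{ij} + e_i e_j δ_{ik} + e_i e_j δ_{jk})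
  + 2 e_i e_j e_k`, and summing over `i, j, k` gives the same expression. Since `G` is smooth when
`d > 0`, its iterated Fréchet derivatives are determined by these directional derivatives.
The case `d = 0`, where `p = 0`, is trivial because the domain is a single point.
-/

open Real

/-- The smooth-max function `G_κ(x) = κ⁻¹ ln(Σ_j exp(κ x_j))`. -/
noncomputable def smoothMax (d : ℕ) (κ : ℝ) (x : Fin d → ℝ) : ℝ :=
  κ⁻¹ * Real.log (∑ j, Real.exp (κ * x j))

/-- `p(v) = Σ_i exp(κ v_i)`. -/
noncomputable def pExp (d : ℕ) (κ : ℝ) (v : Fin d → ℝ) : ℝ :=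
  ∑ i, Real.exp (κ * v i)

/-- `b_{ij}(v) = p(v) − e^{κ v_i}` if `i = j`, and `−e^{κ v_j}` otherwise. -/
noncomputable def bCoef (d : ℕ) (κ : ℝ) (v : Fin d → ℝ) (i j : Fin d) : ℝ :=
  if i = j then pExp d κ v - Real.exp (κ * v i) else -Real.exp (κ * v j)

/-- `c_{ijk}(v)`: the coefficients of the third derivative of the smooth-max function. -/
noncomputable def cCoef (d : ℕ) (κ : ℝ) (v : Fin d → ℝ) (i j k : Fin d) : ℝ :=
  if i = j ∨ j = k then bCoef d κ v i k * (pExp d κ v - 2 * Real.exp (κ * v j))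
  else if i = k then bCoef d κ v i j * (pExp d κ v - 2 * Real.exp (κ * v k))
  else 2 * bCoef d κ v i j * bCoef d κ v i k

/-- The exponential sum `Σ_i a_i exp(κ u_i)` with weights `a`. -/
noncomputable def wExp (d : ℕ) (κ : ℝ) (a u : Fin d → ℝ) : ℝ :=
  ∑ i, a i * Real.exp (κ * u i)

lemma pExp_eq_wExp (d : ℕ) (κ : ℝ) (u : Fin d → ℝ) : pExp d κ u = wExp d κ 1 u := by
  simp [pExp, wExp]

lemma pExp_pos {d : ℕ} [NeZero d] (κ : ℝ) (u : Fin d → ℝ) : 0 < pExp d κ u :=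
  Finset.sum_pos (fun _ _ => Real.exp_pos _) Finset.univ_nonempty

lemma wExp_hasLineDerivAt (d : ℕ) (κ : ℝ) (a u x : Fin d → ℝ) :
    HasLineDerivAt ℝ (wExp d κ a) (κ * wExp d κ (a * x) u) u x := by
  have h : ∀ i ∈ Finset.univ, HasDerivAt (fun t : ℝ => a i * Real.exp (κ * (u i + t * x i)))
      (a i * (Real.exp (κ * (u i + 0 * x i)) * (κ * (1 * x i)))) 0 := fun i _ =>
    (((((hasDerivAt_id (0 : ℝ)).mul_const (x i)).const_add (u i)).const_mul κ).exp).const_mul (a i)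
  have h2 := HasDerivAt.fun_sum h
  unfold HasLineDerivAt
  refine h2.congr_deriv ?_
  simp only [wExp, Finset.mul_sum]
  refine Finset.sum_congr rfl fun i _ => ?_
  simp
  ring

lemma pExp_hasLineDerivAt (d : ℕ) (κ : ℝ) (u x : Fin d → ℝ) :
    HasLineDerivAt ℝ (pExp d κ) (κ * wExp d κ x u) u x := by
  have h := wExp_hasLineDerivAt d κ 1 u x
  rwa [one_mul, ← funext (pExp_eq_wExp d κ)] at h

lemma smoothMax_contDiff {d : ℕ} [NeZero d] (κ : ℝ) : ContDiff ℝ 3 (smoothMax d κ) := by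
  unfold smoothMax
  refine contDiff_const.mul (ContDiff.log (by fun_prop) fun u => (pExp_pos κ u).ne')

lemma fderiv_smoothMax {d : ℕ} [NeZero d] {κ : ℝ} (hκ : 0 < κ) (u z : Fin d → ℝ) :
    fderiv ℝ (smoothMax d κ) u z = wExp d κ z u / pExp d κ u := by
  have hd : DifferentiableAt ℝ (smoothMax d κ) u :=
    (smoothMax_contDiff κ).differentiable (by norm_num) u
  rw [← hd.lineDeriv_eq_fderiv]
  have h : HasDerivAt (fun t : ℝ => pExp d κ (u + t • z)) (κ * wExp d κ z u) 0 :=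
    pExp_hasLineDerivAt d κ u z
  have h2 := (h.log (pExp_pos κ _).ne').const_mul κ⁻¹
  have h3 : HasLineDerivAt ℝ (smoothMax d κ)
    (κ⁻¹ * (κ * wExp d κ z u / pExp d κ (u + (0 : ℝ) • z))) u z := h2
  rw [h3.lineDeriv, zero_smul, add_zero]
  field_simp

lemma fderiv_fderiv_smoothMax {d : ℕ} [NeZero d] {κ : ℝ} (hκ : 0 < κ) (u y z : Fin d → ℝ) :
    fderiv ℝ (fderiv ℝ (smoothMax d κ)) u y z =
      κ * (wExp d κ (z * y) u * pExp d κ u - wExp d κ z u * wExp d κ y u) / pExp d κ u ^ 2 := by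
  have hd : DifferentiableAt ℝ (fderiv ℝ (smoothMax d κ)) u :=
    ((smoothMax_contDiff κ).fderiv_right (m := 2) (by norm_num)).differentiable (by norm_num) u
  -- Evaluation at `z` commutes with differentiation in the direction `y`.
  have h1 : HasLineDerivAt ℝ (fun w => fderiv ℝ (smoothMax d κ) w z)
      (fderiv ℝ (fderiv ℝ (smoothMax d κ)) u y z) u y := by
    have := (hd.hasFDerivAt.clm_apply (hasFDerivAt_const z u)).hasLineDerivAt y
    simpa using this
  simp only [fderiv_smoothMax hκ] at h1
  have hw : HasDerivAt (fun t : ℝ => wExp d κ z (u + t • y)) (κ * wExp d κ (z * y) u) 0 :=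
    wExp_hasLineDerivAt d κ z u y
  have hp : HasDerivAt (fun t : ℝ => pExp d κ (u + t • y)) (κ * wExp d κ y u) 0 :=
    pExp_hasLineDerivAt d κ u y
  have h2 := HasDerivAt.unique h1 (hw.fun_div hp (pExp_pos κ _).ne')
  rw [h2, zero_smul, add_zero]
  ring

lemma fderiv_fderiv_fderiv_smoothMax {d : ℕ} [NeZero d] {κ : ℝ} (hκ : 0 < κ)
    (u x y z : Fin d → ℝ) :
    fderiv ℝ (fderiv ℝ (fderiv ℝ (smoothMax d κ))) u x y z =
      κ ^ 2 * (pExp d κ u ^ 3)⁻¹ * (pExp d κ u ^ 2 * wExp d κ (z * y * x) u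
        - pExp d κ u * (wExp d κ (z * y) u * wExp d κ x u + wExp d κ (z * x) u * wExp d κ y u
          + wExp d κ (y * x) u * wExp d κ z u)
        + 2 * (wExp d κ x u * wExp d κ y u * wExp d κ z u)) := by
  have hd : DifferentiableAt ℝ (fderiv ℝ (fderiv ℝ (smoothMax d κ))) u :=
    (((smoothMax_contDiff κ).fderiv_right (m := 2) (by norm_num)).fderiv_right (m := 1)
      (by norm_num)).differentiable (by norm_num) u
  have h1 : HasLineDerivAt ℝ (fun w => fderiv ℝ (fderiv ℝ (smoothMax d κ)) w y z)
      (fderiv ℝ (fderiv ℝ (fderiv ℝ (smoothMax d κ))) u x y z) u x := by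
    have := ((hd.hasFDerivAt.clm_apply (hasFDerivAt_const y u)).clm_apply
      (hasFDerivAt_const z u)).hasLineDerivAt x
    simpa using this
  simp only [fderiv_fderiv_smoothMax hκ] at h1
  have hw (a : Fin d → ℝ) :
      HasDerivAt (fun t : ℝ => wExp d κ a (u + t • x)) (κ * wExp d κ (a * x) u) 0 :=
    wExp_hasLineDerivAt d κ a u x
  have hp : HasDerivAt (fun t : ℝ => pExp d κ (u + t • x)) (κ * wExp d κ x u) 0 :=
    pExp_hasLineDerivAt d κ u x
  have h2 := HasDerivAt.unique h1
    (((((hw (z * y)).fun_mul hp).fun_sub ((hw z).fun_mul (hw y))).const_mul κ).fun_div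
      (hp.fun_pow 2) (pow_pos (pExp_pos κ _) 2).ne')
  have hne := (pExp_pos κ u).ne'
  rw [h2, zero_smul, add_zero]
  field_simp
  ring

lemma exp_mul_cCoef (d : ℕ) (κ : ℝ) (v : Fin d → ℝ) (i j k : Fin d) :
    Real.exp (κ * v i) * cCoef d κ v i j k =
      (if i = j then if j = k then pExp d κ v ^ 2 * Real.exp (κ * v i) else 0 else 0)
      - (if i = j then pExp d κ v * Real.exp (κ * v i) * Real.exp (κ * v k) else 0)
      - (if i = k then pExp d κ v * Real.exp (κ * v i) * Real.exp (κ * v j) else 0)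
      - (if j = k then pExp d κ v * Real.exp (κ * v i) * Real.exp (κ * v j) else 0)
      + 2 * Real.exp (κ * v i) * Real.exp (κ * v j) * Real.exp (κ * v k) := by
  unfold cCoef bCoef
  by_cases h1 : i = j
  · subst h1
    by_cases h2 : i = k
    · subst h2; simp; ring
    · simp [h2]; ring
  · by_cases h2 : j = k
    · subst h2; simp [h1]; ring
    · by_cases h3 : i = k
      · subst h3; simp [h1, h2]; ring
      · simp [h1, h2, h3]; ring

lemma sum_exp_mul_cCoef (d : ℕ) (κ : ℝ) (v x y z : Fin d → ℝ) :
    ∑ i, ∑ j, ∑ k, Real.exp (κ * v i) * cCoef d κ v i j k * x i * y j * z k =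
      pExp d κ v ^ 2 * wExp d κ (z * y * x) v
        - pExp d κ v * (wExp d κ (z * y) v * wExp d κ x v + wExp d κ (z * x) v * wExp d κ y v
          + wExp d κ (y * x) v * wExp d κ z v)
        + 2 * (wExp d κ x v * wExp d κ y v * wExp d κ z v) := by
  simp only [exp_mul_cCoef, add_mul, sub_mul, Finset.sum_add_distrib, Finset.sum_sub_distrib,
    ite_mul, zero_mul]
  generalize pExp d κ v = p
  have e1 : ∑ i, ∑ j, ∑ k, (if i = j then if j = k then
      p ^ 2 * Real.exp (κ * v i) * x i * y j * z k else 0 else 0)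
      = p ^ 2 * wExp d κ (z * y * x) v := by
    simp only [wExp, Finset.mul_sum, Finset.sum_ite_irrel, Finset.sum_ite_eq, Finset.mem_univ,
      if_true, Finset.sum_const_zero]
    exact Finset.sum_congr rfl fun i _ => by simp only [Pi.mul_apply]; ring
  have e2 : ∑ i, ∑ j, ∑ k, (if i = j then
      p * Real.exp (κ * v i) * Real.exp (κ * v k) * x i * y j * z k else 0)
      = p * (wExp d κ (y * x) v * wExp d κ z v) := by
    simp only [wExp, Finset.sum_mul_sum]
    simp only [Finset.mul_sum, Finset.sum_ite_irrel, Finset.sum_ite_eq,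
      Finset.mem_univ, if_true, Finset.sum_const_zero]
    exact Finset.sum_congr rfl fun i _ => Finset.sum_congr rfl fun k _ => by
      simp only [Pi.mul_apply]; ring
  have e3 : ∑ i, ∑ j, ∑ k, (if i = k then
      p * Real.exp (κ * v i) * Real.exp (κ * v j) * x i * y j * z k else 0)
      = p * (wExp d κ (z * x) v * wExp d κ y v) := by
    simp only [wExp, Finset.sum_mul_sum]
    simp only [Finset.mul_sum, Finset.sum_ite_eq,
      Finset.mem_univ, if_true]
    exact Finset.sum_congr rfl fun i _ => Finset.sum_congr rfl fun k _ => by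
      simp only [Pi.mul_apply]; ring
  have e4 : ∑ i, ∑ j, ∑ k, (if j = k then
      p * Real.exp (κ * v i) * Real.exp (κ * v j) * x i * y j * z k else 0)
      = p * (wExp d κ x v * wExp d κ (z * y) v) := by
    simp only [wExp, Finset.sum_mul_sum]
    simp only [Finset.mul_sum, Finset.sum_ite_eq,
      Finset.mem_univ, if_true]
    exact Finset.sum_congr rfl fun i _ => Finset.sum_congr rfl fun k _ => by
      simp only [Pi.mul_apply]; ring
  have e5 : ∑ i, ∑ j, ∑ k, 2 * Real.exp (κ * v i) * Real.exp (κ * v j) * Real.exp (κ * v k)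
      * x i * y j * z k = 2 * (wExp d κ x v * wExp d κ y v * wExp d κ z v) := by
    simp only [wExp, Finset.sum_mul_sum]
    simp only [Finset.sum_mul, Finset.mul_sum]
    refine Finset.sum_congr rfl fun i _ => ?_
    rw [Finset.sum_comm]
    exact Finset.sum_congr rfl fun j _ => Finset.sum_congr rfl fun k _ => by ring
  rw [e1, e2, e3, e4, e5]
  ring

/-- `G_κ` is three times differentiable at every `v` and its third Fréchet derivative, as
a trilinear form applied to `(x, y, z)`, equals
`κ² p(v)⁻³ Σ_{i,j,k} e^{κ v_i} c_{ijk}(v) x_i y_j z_k`. -/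
theorem stmt_7 (d : ℕ) (κ : ℝ) (hκ : 0 < κ) (v : Fin d → ℝ) :
    DifferentiableAt ℝ (smoothMax d κ) v ∧
    DifferentiableAt ℝ (fderiv ℝ (smoothMax d κ)) v ∧
    DifferentiableAt ℝ (fderiv ℝ (fderiv ℝ (smoothMax d κ))) v ∧
    ∀ x y z : Fin d → ℝ,
      fderiv ℝ (fderiv ℝ (fderiv ℝ (smoothMax d κ))) v x y z =
        κ ^ 2 * ((pExp d κ v) ^ 3)⁻¹ *
          ∑ i, ∑ j, ∑ k,
            Real.exp (κ * v i) * cCoef d κ v i j k * x i * y j * z k := by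
  rcases Nat.eq_zero_or_pos d with rfl | hd
  · refine ⟨(hasFDerivAt_of_subsingleton _ _).differentiableAt,
      (hasFDerivAt_of_subsingleton _ _).differentiableAt,
      (hasFDerivAt_of_subsingleton _ _).differentiableAt, fun x y z => ?_⟩
    rw [Subsingleton.elim x 0, map_zero]
    simp
  · have : NeZero d := ⟨hd.ne'⟩
    have c1 := smoothMax_contDiff (d := d) κ
    have c2 := c1.fderiv_right (m := 2) (by norm_num)
    have c3 := c2.fderiv_right (m := 1) (by norm_num)
    refine ⟨c1.differentiable (by norm_num) v, c2.differentiable (by norm_num) v,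
      c3.differentiable (by norm_num) v, fun x y z => ?_⟩
    rw [fderiv_fderiv_fderiv_smoothMax hκ, sum_exp_mul_cCoef]
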